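/- arXiv:2501.12846 — 2 statements merged into one kernel-verified Lean document; each statement's English description precedes it below -/
import Mathlib

section
/- For every n ≥ 1, the equivalence relation =_{ℕ^ℕ}^{n+} is compact for learning: a countable family K of pairwise nonisomorphic structures in Mod is =_{ℕ^ℕ}^{n+}-learnable if and only if for all distinct A, B ∈ K the pair {A, B} is =_{ℕ^ℕ}^{n+}-learnable. -/
/-!  Common definitions.

`Tower n` is the space ℕ^(ℕ^(n+1)) of the paper: `Tower 0 = ℕ → ℕ`,
`Tower (n+1) = ℕ → Tower n`, each with the product topology (ℕ discrete).
-/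

def Tower : ℕ → Type
  | 0 => ℕ → ℕ
  | n + 1 => ℕ → Tower n

instance Tower.topologicalSpace : (n : ℕ) → TopologicalSpace (Tower n)
  | 0 => inferInstanceAs (TopologicalSpace (ℕ → ℕ))
  | n + 1 => letI := Tower.topologicalSpace n
             inferInstanceAs (TopologicalSpace (ℕ → Tower n))

/-- The Friedman–Stanley jump `E⁺` of an equivalence relation `E` on `X`. -/
def FSJump {X : Type*} (E : X → X → Prop) (p q : ℕ → X) : Prop :=
  (∀ k, ∃ l, E (p k) (q l)) ∧ ∀ l, ∃ k, E (q l) (p k)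

/-- The power `E^ω` of an equivalence relation `E` on `X`. -/
def RelPow {X : Type*} (E : X → X → Prop) (p q : ℕ → X) : Prop :=
  ∀ k, E (p k) (q k)

/-- `eqNatPlus n` is the relation `=_ℕ^{(n+1)+}` on `Tower n = ℕ^(ℕ^(n+1))`. -/
def eqNatPlus : (n : ℕ) → Tower n → Tower n → Prop
  | 0 => FSJump (· = · : ℕ → ℕ → Prop)
  | n + 1 => FSJump (eqNatPlus n)

/-- `eqBairePlus n` is the relation `=_{ℕ^ℕ}^{(n+1)+}` on `Tower (n+1) = ℕ^(ℕ^(n+2))`. -/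
def eqBairePlus : (n : ℕ) → Tower (n + 1) → Tower (n + 1) → Prop
  | 0 => FSJump (· = · : (ℕ → ℕ) → (ℕ → ℕ) → Prop)
  | n + 1 => FSJump (eqBairePlus n)

/-- `FullRel m` on `Tower m = ℕ^(ℕ^(m+1))`: for `m = 2n` it is `(=_ℕ^+)^{n(ω+)}`,
for `m = 2n+1` it is `(=_{ℕ^ℕ}^+)^{n(ω+)}` (with `E^{0(ω+)} = E`,
`E^{(n+1)(ω+)} = ((E^{n(ω+)})^ω)^+`). -/
def FullRel : (m : ℕ) → Tower m → Tower m → Prop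
  | 0 => FSJump (· = · : ℕ → ℕ → Prop)
  | 1 => FSJump (· = · : (ℕ → ℕ) → (ℕ → ℕ) → Prop)
  | m + 2 => FSJump (RelPow (FullRel m))

/-- The pair of canonical elements `(F_{m+1}, I_{m+1})` of `Tower m = ℕ^(ℕ^(m+1))`. -/
def can : (m : ℕ) → Tower m × Tower m
  | 0 => (fun k => if k = 0 then 0 else 1, fun _ => 1)
  | 1 => (fun i k => if i = 0 then 0 else if k + 1 < i then 0 else 1,
          fun i k => if k < i then 0 else 1)
  | m + 2 =>
      (fun i k => if i = 0 then (can m).1 else if k + 1 < i then (can m).1 else (can m).2,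
       fun i k => if k < i then (can m).1 else (can m).2)

/-- The canonical element `F_{m+1} ∈ ℕ^(ℕ^(m+1))`. -/
def canF (m : ℕ) : Tower m := (can m).1

/-- The canonical element `I_{m+1} ∈ ℕ^(ℕ^(m+1))`. -/
def canI (m : ℕ) : Tower m := (can m).2

/-- `p ∈ Tower m = ℕ^(ℕ^(m+1))` is `full_{m+1}`. -/
def IsFull (m : ℕ) (p : Tower m) : Prop := FullRel m p (canF m)

/-- `p ∈ Tower m = ℕ^(ℕ^(m+1))` is `initial_{m+1}`. -/
def IsInitial (m : ℕ) (p : Tower m) : Prop := FullRel m p (canI m)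

open Classical in
/-- The permission operator `∧₀`. -/
noncomputable def perm0 (p q : ℕ → ℕ) : ℕ → ℕ :=
  fun k => if ∀ j ≤ k, p j = q j then p k else 1

/-- The permission operator `∧_{m+1}` on `Tower m = ℕ^(ℕ^(m+1))`
(with `⟨·,·⟩ = Nat.pair`). -/
noncomputable def perm : (m : ℕ) → Tower m → Tower m → Tower m
  | 0, p, q => fun x => max (p (Nat.unpair x).1) (q (Nat.unpair x).2)
  | 1, p, q => fun x => perm0 (p (Nat.unpair x).1) (q (Nat.unpair x).2)
  | m + 2, p, q => fun x k => perm m (p (Nat.unpair x).1 k) (q (Nat.unpair x).2 k)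

/-- The operator `⊗_{m+1,i}` on `Tower m = ℕ^(ℕ^(m+1))` (with `⟨·,·⟩ = Nat.pair`). -/
def otimes : (m : ℕ) → ℕ → Tower m → Tower m
  | 0, i, p => fun k => Nat.pair (p k) i
  | m + 1, i, p => fun k => otimes m i (p k)

/-- `E` continuously reduces to `F`. -/
def ContReduces {X Y : Type*} [TopologicalSpace X] [TopologicalSpace Y]
    (E : X → X → Prop) (F : Y → Y → Prop) : Prop :=
  ∃ f : X → Y, Continuous f ∧ ∀ x x', E x x' ↔ F (f x) (f x')

/-- `SigmaLevel X n` is the pointclass `Σ⁰_{n+1}(X)`: `Σ⁰_1` = open sets,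
`Σ⁰_{n+1}` = countable unions of complements of `Σ⁰_n` sets. -/
def SigmaLevel (X : Type*) [TopologicalSpace X] : ℕ → Set (Set X)
  | 0 => {C | IsOpen C}
  | n + 1 => {C | ∃ A : ℕ → Set X, (∀ i, A i ∈ SigmaLevel X n) ∧ C = ⋃ i, (A i)ᶜ}

/-- The space of `(ι, ar)`-structures with domain ℕ. -/
def Md (ι : Type) (ar : ι → ℕ) : Type := ∀ i : ι, (Fin (ar i) → ℕ) → Bool

instance (ι : Type) (ar : ι → ℕ) : TopologicalSpace (Md ι ar) :=
  inferInstanceAs (TopologicalSpace (∀ i : ι, (Fin (ar i) → ℕ) → Bool))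

/-- Isomorphism of structures with domain ℕ. -/
def Iso {ι : Type} {ar : ι → ℕ} (A B : Md ι ar) : Prop :=
  ∃ σ : ℕ → ℕ, Function.Bijective σ ∧ ∀ i v, A i v = B i (σ ∘ v)

/-- The learning domain of a family: the closure of `K` under isomorphism. -/
def LearnDom {ι : Type} {ar : ι → ℕ} (K : Set (Md ι ar)) : Set (Md ι ar) :=
  {S | ∃ A ∈ K, Iso S A}

/-- The family `K` is `E`-learnable. -/
def Learnable {ι : Type} {ar : ι → ℕ} {X : Type*} [TopologicalSpace X]
    (E : X → X → Prop) (K : Set (Md ι ar)) : Prop :=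
  ∃ Γ : LearnDom K → X, Continuous Γ ∧
    ∀ S S' : LearnDom K, (Iso S.1 S'.1 ↔ E (Γ S) (Γ S'))

/-- A countable family of pairwise nonisomorphic structures. -/
def GoodFamily {ι : Type} {ar : ι → ℕ} (K : Set (Md ι ar)) : Prop :=
  K.Countable ∧ ∀ A ∈ K, ∀ B ∈ K, A ≠ B → ¬ Iso A B

/-- `E` is learn-reducible to `F` (w.r.t. structures in `Md ι ar`). -/
def LearnRed (ι : Type) (ar : ι → ℕ) {X Y : Type*} [TopologicalSpace X]
    [TopologicalSpace Y] (E : X → X → Prop) (F : Y → Y → Prop) : Prop :=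
  ∀ K : Set (Md ι ar), GoodFamily K → Learnable E K → Learnable F K

/-- `E` is compact for learning (w.r.t. structures in `Md ι ar`). -/
def CompactForLearning (ι : Type) (ar : ι → ℕ) {X : Type*} [TopologicalSpace X]
    (E : X → X → Prop) : Prop :=
  ∀ K : Set (Md ι ar), GoodFamily K →
    (Learnable E K ↔ ∀ A ∈ K, ∀ B ∈ K, A ≠ B → Learnable E ({A, B} : Set (Md ι ar)))

/-!
Let `N ≥ 1`. The bridge between the two sides is separation by isomorphism-invariant `Σ⁰_{2N}` sets.

The classes of `=_{ℕ^ℕ}^{(N-1)+}` are `Π⁰_{2N-1}`. If `Γ` learns `{A, B}` for the `N`-th jump, then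
some coordinate of `Γ A` (or of `Γ B`) is equivalent to no coordinate of the other value, and
having a coordinate of `Γ S` equivalent to this one is a relatively `Σ⁰_{2N}` condition on `S` that
tells the two isomorphism types apart. Extending it to a `Σ⁰_{2N}` set of structures and taking the
Vaught transform under the logic action of `S_∞`, which preserves the level, gives a separating
set that is isomorphism-invariant everywhere, hence also on the rest of the family.

Conversely, there is one pair of `=_{ℕ^ℕ}^{N+}`-inequivalent points to which every `Σ⁰_{2N}` set
continuously reduces. Applying such reductions to countably many separating sets, one for each pair
from the family, learns the family for the `ω`-power of `=_{ℕ^ℕ}^{N+}`. This power reduces to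
`=_{ℕ^ℕ}^{N+}` itself: list all coordinates in a single sequence, tagging each by its index.
-/

open Set Filter Topology TopologicalSpace

section FriedmanStanleyJump

variable {Y : Type*} {E : Y → Y → Prop}

lemma FSJump.equivalence (hE : Equivalence E) : Equivalence (FSJump E) where
  refl _ := ⟨fun k ↦ ⟨k, hE.refl _⟩, fun l ↦ ⟨l, hE.refl _⟩⟩
  symm h := ⟨h.2, h.1⟩
  trans {_ _ _} h h' :=
    ⟨fun k ↦ let ⟨l, hl⟩ := h.1 k
      let ⟨m, hm⟩ := h'.1 l
      ⟨m, hE.trans hl hm⟩,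
    fun m ↦ let ⟨l, hl⟩ := h'.2 m
      let ⟨k, hk⟩ := h.2 l
      ⟨k, hE.trans hl hk⟩⟩

lemma FSJump.exists_rel_iff (hE : Equivalence E) {p q : ℕ → Y} (h : FSJump E p q) (y : Y) :
    (∃ l, E (p l) y) ↔ ∃ l, E (q l) y :=
  ⟨fun ⟨l, hl⟩ ↦ (h.1 l).imp fun _ hm ↦ hE.trans (hE.symm hm) hl,
    fun ⟨l, hl⟩ ↦ (h.2 l).imp fun _ hm ↦ hE.trans (hE.symm hm) hl⟩

lemma fsJump_iff_forall_mem_range {p q : ℕ → Y} :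
    FSJump E p q ↔
      (∀ z ∈ range p, ∃ w ∈ range q, E z w) ∧ ∀ w ∈ range q, ∃ z ∈ range p, E w z := by
  simp only [FSJump, forall_mem_range, exists_range_iff]

end FriedmanStanleyJump

section BorelHierarchy

variable {X Y : Type*} [TopologicalSpace X] [TopologicalSpace Y] {n : ℕ}

/-- The pointclass `Π⁰_{n+1}(X)` of complements of `Σ⁰_{n+1}` sets, with the indexing of
`SigmaLevel`. -/
def PiLevel (X : Type*) [TopologicalSpace X] (n : ℕ) : Set (Set X) :=
  {C | Cᶜ ∈ SigmaLevel X n}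

lemma compl_mem_piLevel_iff {V : Set X} : Vᶜ ∈ PiLevel X n ↔ V ∈ SigmaLevel X n := by
  rw [PiLevel, mem_ofPred_eq, compl_compl]

lemma mem_sigmaLevel_succ_iff {V : Set X} :
    V ∈ SigmaLevel X (n + 1) ↔ ∃ C : ℕ → Set X, (∀ i, C i ∈ PiLevel X n) ∧ V = ⋃ i, C i := by
  constructor
  · rintro ⟨A, hA, rfl⟩
    exact ⟨fun i ↦ (A i)ᶜ, fun i ↦ compl_mem_piLevel_iff.2 (hA i), rfl⟩
  · rintro ⟨C, hC, rfl⟩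
    exact ⟨fun i ↦ (C i)ᶜ, hC, by simp only [compl_compl]⟩

lemma PiLevel.exists_eq_iInter {C : Set X} (hC : C ∈ PiLevel X (n + 1)) :
    ∃ V : ℕ → Set X, (∀ i, V i ∈ SigmaLevel X n) ∧ C = ⋂ i, V i := by
  obtain ⟨V, hV, hCV⟩ := hC
  exact ⟨V, hV, compl_injective (hCV.trans (compl_iInter V).symm)⟩

lemma empty_and_univ_mem_sigmaLevel (n : ℕ) :
    (∅ : Set X) ∈ SigmaLevel X n ∧ (univ : Set X) ∈ SigmaLevel X n := by
  induction n with
  | zero => exact ⟨isOpen_empty, isOpen_univ⟩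
  | succ n ih =>
    exact ⟨⟨fun _ ↦ univ, fun _ ↦ ih.2, by simp only [compl_univ, iUnion_empty]⟩,
      ⟨fun _ ↦ ∅, fun _ ↦ ih.1, by simp only [compl_empty, iUnion_const]⟩⟩

lemma SigmaLevel.empty_mem (n : ℕ) : (∅ : Set X) ∈ SigmaLevel X n :=
  (empty_and_univ_mem_sigmaLevel n).1

lemma SigmaLevel.iUnion_piLevel_mem {α : Type*} [Countable α] {C : α → Set X}
    (hC : ∀ a, C a ∈ PiLevel X n) : ⋃ a, C a ∈ SigmaLevel X (n + 1) := by
  rcases isEmpty_or_nonempty α with hα | hα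
  · rw [iUnion_of_empty]
    exact SigmaLevel.empty_mem _
  · obtain ⟨e, he⟩ := exists_surjective_nat α
    exact mem_sigmaLevel_succ_iff.2 ⟨C ∘ e, fun k ↦ hC (e k), (he.iUnion_comp C).symm⟩

lemma PiLevel.iInter_sigmaLevel_mem {α : Type*} [Countable α] {V : α → Set X}
    (hV : ∀ a, V a ∈ SigmaLevel X n) : ⋂ a, V a ∈ PiLevel X (n + 1) := by
  rw [PiLevel, mem_ofPred_eq, compl_iInter]
  exact SigmaLevel.iUnion_piLevel_mem fun a ↦ compl_mem_piLevel_iff.2 (hV a)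

lemma SigmaLevel.iUnion_mem {α : Type*} [Countable α] {V : α → Set X}
    (hV : ∀ a, V a ∈ SigmaLevel X n) : ⋃ a, V a ∈ SigmaLevel X n := by
  cases n with
  | zero => exact isOpen_iUnion hV
  | succ n =>
    choose C hC hVC using fun a ↦ mem_sigmaLevel_succ_iff.1 (hV a)
    have hV_eq : ⋃ a, V a = ⋃ p : α × ℕ, C p.1 p.2 := by
      simp only [hVC, iUnion_prod']
    rw [hV_eq]
    exact SigmaLevel.iUnion_piLevel_mem fun p ↦ hC p.1 p.2

lemma SigmaLevel.union_mem {U V : Set X} (hU : U ∈ SigmaLevel X n) (hV : V ∈ SigmaLevel X n) :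
    U ∪ V ∈ SigmaLevel X n := by
  rw [union_eq_iUnion]
  exact SigmaLevel.iUnion_mem (Bool.forall_bool.2 ⟨hV, hU⟩)

lemma PiLevel.inter_mem {C D : Set X} (hC : C ∈ PiLevel X n) (hD : D ∈ PiLevel X n) :
    C ∩ D ∈ PiLevel X n := by
  rw [PiLevel, mem_ofPred_eq, compl_inter]
  exact SigmaLevel.union_mem hC hD

lemma SigmaLevel.inter_mem {U V : Set X} (hU : U ∈ SigmaLevel X n) (hV : V ∈ SigmaLevel X n) :
    U ∩ V ∈ SigmaLevel X n := by
  cases n with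
  | zero => exact IsOpen.inter hU hV
  | succ n =>
    obtain ⟨C, hC, rfl⟩ := mem_sigmaLevel_succ_iff.1 hU
    obtain ⟨D, hD, rfl⟩ := mem_sigmaLevel_succ_iff.1 hV
    have h_eq : (⋃ i, C i) ∩ ⋃ i, D i = ⋃ p : ℕ × ℕ, C p.1 ∩ D p.2 := by
      simp only [iUnion_inter_iUnion, iUnion_prod']
    rw [h_eq]
    exact SigmaLevel.iUnion_piLevel_mem fun p ↦ PiLevel.inter_mem (hC p.1) (hD p.2)

lemma SigmaLevel.preimage_mem {f : X → Y} (hf : Continuous f) {V : Set Y}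
    (hV : V ∈ SigmaLevel Y n) : f ⁻¹' V ∈ SigmaLevel X n := by
  induction n generalizing V with
  | zero => exact IsOpen.preimage hf hV
  | succ n ih =>
    obtain ⟨A, hA, rfl⟩ := hV
    exact ⟨fun i ↦ f ⁻¹' A i, fun i ↦ ih (hA i), by
      simp only [preimage_iUnion, preimage_compl]⟩

lemma PiLevel.preimage_mem {f : X → Y} (hf : Continuous f) {C : Set Y}
    (hC : C ∈ PiLevel Y n) : f ⁻¹' C ∈ PiLevel X n :=
  SigmaLevel.preimage_mem hf hC

lemma SigmaLevel.exists_preimage_eq {f : X → Y} (hf : IsInducing f) {V : Set X}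
    (hV : V ∈ SigmaLevel X n) : ∃ W ∈ SigmaLevel Y n, f ⁻¹' W = V := by
  induction n generalizing V with
  | zero => exact hf.isOpen_iff.1 hV
  | succ n ih =>
    obtain ⟨A, hA, rfl⟩ := hV
    choose B hB hBA using fun i ↦ ih (hA i)
    refine ⟨⋃ i, (B i)ᶜ, ⟨B, hB, rfl⟩, ?_⟩
    simp only [preimage_iUnion, preimage_compl, hBA]

lemma SigmaLevel.baireMeasurableSet {V : Set X} (hV : V ∈ SigmaLevel X n) :
    BaireMeasurableSet V := by
  induction n generalizing V with
  | zero => exact IsOpen.baireMeasurableSet hV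
  | succ n ih =>
    obtain ⟨A, hA, rfl⟩ := hV
    exact .iUnion fun i ↦ (ih (hA i)).compl

end BorelHierarchy

section ComplexityOfClasses

variable {Y : Type*} [TopologicalSpace Y] {E : Y → Y → Prop} {n : ℕ}

lemma setOf_exists_rel_mem_sigmaLevel (hE : ∀ y, {z | E z y} ∈ PiLevel Y n) (y : Y) :
    {p : ℕ → Y | ∃ l, E (p l) y} ∈ SigmaLevel (ℕ → Y) (n + 1) := by
  have h_eq : {p : ℕ → Y | ∃ l, E (p l) y} = ⋃ l, (fun p ↦ p l) ⁻¹' {z | E z y} := by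
    ext p
    simp only [mem_ofPred_eq, mem_iUnion, mem_preimage]
  rw [h_eq]
  exact SigmaLevel.iUnion_piLevel_mem fun l ↦ PiLevel.preimage_mem (continuous_apply l) (hE y)

lemma setOf_fsJump_mem_piLevel (hE_symm : Std.Symm E)
    (hE : ∀ y, {z | E z y} ∈ PiLevel Y n) (q : ℕ → Y) :
    {p | FSJump E p q} ∈ PiLevel (ℕ → Y) (n + 2) := by
  have h_eq : {p | FSJump E p q} =
      (⋂ k, ⋃ l, (fun p : ℕ → Y ↦ p k) ⁻¹' {z | E z (q l)}) ∩
        ⋂ l, {p : ℕ → Y | ∃ k, E (p k) (q l)} := by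
    ext p
    simp only [FSJump, comm_of E, mem_ofPred_eq, mem_inter_iff, mem_iInter, mem_iUnion,
      mem_preimage]
  rw [h_eq]
  refine PiLevel.inter_mem (PiLevel.iInter_sigmaLevel_mem fun k ↦ ?_)
    (PiLevel.iInter_sigmaLevel_mem fun l ↦ setOf_exists_rel_mem_sigmaLevel hE (q l))
  exact SigmaLevel.iUnion_piLevel_mem fun l ↦
    PiLevel.preimage_mem (continuous_apply k) (hE (q l))

end ComplexityOfClasses

section VaughtTransform

variable {G X : Type*} [TopologicalSpace G]

lemma not_isMeagre_diff_iff [SecondCountableTopology G] [BaireSpace G] {U T : Set G}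
    (hU : IsOpen U) (hT : BaireMeasurableSet T) :
    ¬ IsMeagre (U \ T) ↔ ∃ N ∈ countableBasis G, N ⊆ U ∧ IsMeagre (N ∩ T) := by
  constructor
  · intro h
    obtain ⟨W, hW_open, hTW⟩ := hT.compl.residualEq_isOpen
    have hUW : (U ∩ W).Nonempty := by
      by_contra h_empty
      rw [not_nonempty_iff_eq_empty] at h_empty
      refine h ?_
      filter_upwards [hTW.mem_iff] with g hg hgUT
      exact (h_empty ▸ ⟨hgUT.1, hg.1 hgUT.2⟩ : g ∈ (∅ : Set G))
    obtain ⟨g, hg⟩ := hUW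
    obtain ⟨N, hN, -, hNUW⟩ :=
      (isBasis_countableBasis G).exists_subset_of_mem_open hg (hU.inter hW_open)
    refine ⟨N, hN, hNUW.trans inter_subset_left, ?_⟩
    filter_upwards [hTW.mem_iff] with g hg hgNT
    exact hg.2 (hNUW hgNT.1).2 hgNT.2
  · rintro ⟨N, hN, hNU, hNT⟩ hUT
    refine not_isMeagre_of_isOpen (isOpen_of_mem_countableBasis hN)
      (nonempty_of_mem_countableBasis hN) ((hNT.union hUT).mono fun g hg ↦ ?_)
    exact (em (g ∈ T)).imp (fun hgT ↦ ⟨hg, hgT⟩) fun hgT ↦ ⟨hNU hg, hgT⟩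

variable [Group G] [MulAction G X]

/-- The Vaught transform `V^{ΔU}` of `V ⊆ X` under an action of `G` on `X`: the points `x` with
`g • x ∈ V` for nonmeagrely many `g ∈ U`. -/
def vaughtDelta (V : Set X) (U : Set G) : Set X :=
  {x | ¬ IsMeagre (U ∩ (· • x) ⁻¹' V)}

lemma vaughtDelta_iUnion (V : ℕ → Set X) (U : Set G) :
    vaughtDelta (⋃ i, V i) U = ⋃ i, vaughtDelta (V i) U := by
  ext x
  simp only [vaughtDelta, mem_ofPred_eq, mem_iUnion, preimage_iUnion, inter_iUnion]
  refine ⟨fun h ↦ ?_, fun ⟨i, hi⟩ h ↦ hi (h.mono (subset_iUnion (fun i ↦ U ∩ (· • x) ⁻¹' V i) i))⟩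
  by_contra! h_meagre
  exact h (isMeagre_iUnion h_meagre)

lemma smul_mem_vaughtDelta_univ_iff [ContinuousMul G] {V : Set X} (g : G) (x : X) :
    g • x ∈ vaughtDelta V (univ : Set G) ↔ x ∈ vaughtDelta V (univ : Set G) := by
  have h_shift : (· • g • x : G → X) ⁻¹' V = Homeomorph.mulRight g ⁻¹' ((· • x) ⁻¹' V) := by
    ext h
    simp only [mem_preimage, Homeomorph.coe_mulRight, mul_smul]
  rw [vaughtDelta, mem_ofPred_eq, mem_ofPred_eq, univ_inter, univ_inter, h_shift, not_iff_not,
    IsMeagre, IsMeagre, ← preimage_compl, ← mem_map, Homeomorph.residual_map_eq]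

variable [TopologicalSpace X] [ContinuousSMul G X] [BaireSpace G] {n : ℕ}

lemma isOpen_vaughtDelta {V : Set X} {U : Set G} (hV : IsOpen V) (hU : IsOpen U) :
    IsOpen (vaughtDelta V U) := by
  have h_eq : vaughtDelta V U = ⋃ g ∈ U, (g • ·) ⁻¹' V := by
    ext x
    simp only [mem_iUnion, mem_preimage, exists_prop]
    refine ⟨nonempty_of_not_isMeagre, not_isMeagre_of_isOpen (hU.inter ?_)⟩
    exact hV.preimage (continuous_id.smul continuous_const)
  rw [h_eq]
  exact isOpen_biUnion fun g _ ↦ hV.preimage (continuous_const_smul g)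

variable [SecondCountableTopology G]

lemma vaughtDelta_compl {A : Set X} (hA : A ∈ SigmaLevel X n) {U : Set G} (hU : IsOpen U) :
    vaughtDelta Aᶜ U = ⋃ N : {N // N ∈ countableBasis G ∧ N ⊆ U}, (vaughtDelta A N.1)ᶜ := by
  ext x
  have hA_baire : BaireMeasurableSet ((· • x : G → X) ⁻¹' A) :=
    SigmaLevel.baireMeasurableSet
      (SigmaLevel.preimage_mem (continuous_id.smul continuous_const) hA)
  have h := not_isMeagre_diff_iff hU hA_baire
  simpa [vaughtDelta, sdiff_eq, and_assoc] using h

lemma SigmaLevel.vaughtDelta_mem {V : Set X} (hV : V ∈ SigmaLevel X n) {U : Set G}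
    (hU : IsOpen U) : vaughtDelta V U ∈ SigmaLevel X n := by
  induction n generalizing V U with
  | zero => exact isOpen_vaughtDelta hV hU
  | succ n ih =>
    obtain ⟨A, hA, rfl⟩ := hV
    rw [vaughtDelta_iUnion]
    refine SigmaLevel.iUnion_mem fun i ↦ ?_
    have : Countable {N // N ∈ countableBasis G ∧ N ⊆ U} :=
      ((countable_countableBasis G).mono (sep_subset _ _)).to_subtype
    rw [vaughtDelta_compl (hA i) hU]
    exact SigmaLevel.iUnion_piLevel_mem fun N ↦ compl_mem_piLevel_iff.2
      (ih (hA i) (isOpen_of_mem_countableBasis N.2.1))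

lemma SigmaLevel.exists_invariant_separating [ContinuousMul G] {V : Set X}
    (hV : V ∈ SigmaLevel X n) {a b : X} (ha : ∀ g : G, g • a ∈ V) (hb : ∀ g : G, g • b ∉ V) :
    ∃ W ∈ SigmaLevel X n, (∀ (g : G) x, g • x ∈ W ↔ x ∈ W) ∧ a ∈ W ∧ b ∉ W := by
  refine ⟨vaughtDelta V (univ : Set G), SigmaLevel.vaughtDelta_mem hV isOpen_univ,
    smul_mem_vaughtDelta_univ_iff, ?_, ?_⟩
  · have h_eq : (· • a : G → X) ⁻¹' V = univ := eq_univ_of_forall ha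
    simpa only [vaughtDelta, mem_ofPred_eq, h_eq, inter_univ] using
      not_isMeagre_of_isOpen isOpen_univ univ_nonempty
  · have h_eq : (· • b : G → X) ⁻¹' V = ∅ := eq_empty_of_forall_notMem hb
    simp only [vaughtDelta, mem_ofPred_eq, h_eq, inter_empty, IsMeagre.empty,
      not_true_eq_false, not_false_eq_true]

end VaughtTransform

section HardPairs

lemma exists_seq_of_countable {α β : Type*} {s : Set α} (hs : s.Countable) {t : Set β}
    (ht : t.Nonempty) {P : α → β → Prop} (h : ∀ a ∈ s, ∃ b ∈ t, P a b) :
    ∃ f : ℕ → β, (∀ m, f m ∈ t) ∧ ∀ a ∈ s, ∃ m, P a (f m) := by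
  obtain ⟨b₀, hb₀⟩ := ht
  have : Nonempty β := ⟨b₀⟩
  choose! b hb hPb using h
  obtain ⟨f, hf⟩ := ((hs.image b).insert b₀).exists_eq_range (insert_nonempty _ _)
  refine ⟨f, fun m ↦ ?_, fun a ha ↦ ?_⟩
  · exact insert_subset hb₀ (image_subset_iff.2 hb) (hf ▸ mem_range_self m)
  · obtain ⟨m, hm⟩ : b a ∈ range f := hf ▸ mem_insert_of_mem _ (mem_image_of_mem b ha)
    exact ⟨m, hm ▸ hPb a ha⟩

lemma exists_forall_mem_iff_lt {X : Type*} {V : ℕ → Set X} (hV : Antitone V) {x : X}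
    (hx : x ∉ ⋂ i, V i) :
    ∃ k, ∀ j, x ∈ V j ↔ j < k := by
  classical
  have h_exists : ∃ k, x ∉ V k := by simpa only [mem_iInter, not_forall] using hx
  refine ⟨Nat.find h_exists, fun j ↦ ?_⟩
  rw [Nat.lt_find_iff]
  exact ⟨fun hj m hm ↦ not_not.2 (hV hm hj), fun hj ↦ not_not.1 (hj j le_rfl)⟩

variable {X Y Z : Type*} [TopologicalSpace X] [TopologicalSpace Y] [TopologicalSpace Z]
  {E : Y → Y → Prop} {𝒞 𝒟 : Set (Set X)} {y : Y} {Q : Set Y}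

/-- Continuous reduction of the set `C` to the pair `(y, Q)`, read up to `E`: points of `C` go to
the class of `y`, points outside `C` to classes of members of `Q`. -/
def PairReduces (E : Y → Y → Prop) (C : Set X) (y : Y) (Q : Set Y) : Prop :=
  ∃ g : X → Y, Continuous g ∧ (∀ x ∈ C, E (g x) y) ∧ ∀ x ∉ C, ∃ z ∈ Q, E (g x) z

/-- The pair `(y, Q)` is hard for the pointclass `𝒞`: `y` is inequivalent to all members of `Q`
and every set of `𝒞` reduces to the pair. -/
def IsHard (E : Y → Y → Prop) (𝒞 : Set (Set X)) (y : Y) (Q : Set Y) : Prop :=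
  (∀ z ∈ Q, ¬ E y z) ∧ ∀ C ∈ 𝒞, PairReduces E C y Q

lemma IsHard.map {F : Z → Z → Prop} {f : Y → Z} (hf : Continuous f)
    (hEF : ∀ y y', E y y' ↔ F (f y) (f y')) (h : IsHard E 𝒞 y Q) :
    IsHard F 𝒞 (f y) (f '' Q) := by
  refine ⟨forall_mem_image.2 fun z hz ↦ (hEF y z).not.1 (h.1 z hz), fun C hC ↦ ?_⟩
  obtain ⟨g, hg, hg_mem, hg_notMem⟩ := h.2 C hC
  refine ⟨f ∘ g, hf.comp hg, fun x hx ↦ (hEF _ _).1 (hg_mem x hx), fun x hx ↦ ?_⟩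
  obtain ⟨z, hz, hgz⟩ := hg_notMem x hx
  exact ⟨f z, mem_image_of_mem f hz, (hEF _ _).1 hgz⟩

lemma IsHard.exists_rel_iff (hE : Equivalence E) {z : Y} (h : IsHard E 𝒞 y {z}) {C : Set X}
    (hC : C ∈ 𝒞) :
    ∃ g : X → Y, Continuous g ∧ ∀ x x', E (g x) (g x') ↔ (x ∈ C ↔ x' ∈ C) := by
  obtain ⟨g, hg, hg_mem, hg_notMem⟩ := h.2 C hC
  have hg_mem_iff (x : X) : x ∈ C ↔ E (g x) y := by
    refine ⟨hg_mem x, fun hxy ↦ ?_⟩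
    by_contra hx
    obtain ⟨_, rfl, hxz⟩ := hg_notMem x hx
    exact h.1 _ rfl (hE.trans (hE.symm hxy) hxz)
  refine ⟨g, hg, fun x x' ↦ ⟨fun hxx' ↦ ?_, fun hC_iff ↦ ?_⟩⟩
  · rw [hg_mem_iff, hg_mem_iff]
    exact ⟨hE.trans (hE.symm hxx'), hE.trans hxx'⟩
  · by_cases hx : x ∈ C
    · exact hE.trans (hg_mem x hx) (hE.symm (hg_mem x' (hC_iff.1 hx)))
    · obtain ⟨_, rfl, hxz⟩ := hg_notMem x hx
      obtain ⟨_, rfl, hxz'⟩ := hg_notMem x' (hC_iff.not.1 hx)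
      exact hE.trans hxz (hE.symm hxz')

-- Padding the values `g i x` with all of `q` leaves only one question open: whether the class of
-- `y` is hit, which happens exactly when `x` lies in some `C i`.
lemma PairReduces.fsJump_iUnion (hE : Equivalence E) {p q : ℕ → Y} {C : ℕ → Set X}
    (hp : range p = insert y (range q)) (hC : ∀ i, PairReduces E (C i) y (range q)) :
    PairReduces (FSJump E) (⋃ i, C i) p {q} := by
  choose g hg hg_mem hg_notMem using hC
  let f (x : X) : ℕ → Y := Sum.elim (fun i ↦ g i x) q ∘ Equiv.natSumNatEquivNat.symm
  have hf_range (x : X) : range (f x) = range (fun i ↦ g i x) ∪ range q := by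
    rw [EquivLike.range_comp, Sum.elim_range]
  have hf : Continuous f := continuous_pi fun k ↦ by
    rcases hk : Equiv.natSumNatEquivNat.symm k with i | i
    · simpa only [f, Function.comp_apply, hk, Sum.elim_inl] using hg i
    · simpa only [f, Function.comp_apply, hk, Sum.elim_inr] using continuous_const
  refine ⟨f, hf, fun x hx ↦ ?_, fun x hx ↦ ⟨q, rfl, ?_⟩⟩ <;>
    rw [fsJump_iff_forall_mem_range, hf_range]
  · obtain ⟨i, hi⟩ := mem_iUnion.1 hx
    rw [hp]
    refine ⟨?_, ?_⟩
    · rintro z (⟨j, rfl⟩ | hz)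
      · by_cases hj : x ∈ C j
        · exact ⟨y, mem_insert _ _, hg_mem j x hj⟩
        · exact (hg_notMem j x hj).imp fun w hw ↦ ⟨mem_insert_of_mem _ hw.1, hw.2⟩
      · exact ⟨z, mem_insert_of_mem _ hz, hE.refl z⟩
    · rintro w (rfl | hw)
      · exact ⟨g i x, .inl ⟨i, rfl⟩, hE.symm (hg_mem i x hi)⟩
      · exact ⟨w, .inr hw, hE.refl w⟩
  · refine ⟨?_, fun w hw ↦ ⟨w, .inr hw, hE.refl w⟩⟩
    rintro z (⟨j, rfl⟩ | hz)
    · exact hg_notMem j x fun hj ↦ hx (mem_iUnion.2 ⟨j, hj⟩)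
    · exact ⟨z, hz, hE.refl z⟩

lemma IsHard.exists_fsJump (hE : Equivalence E) {q : ℕ → Y} {n : ℕ}
    (h : IsHard E (PiLevel X n) y (range q)) :
    ∃ p, IsHard (FSJump E) (SigmaLevel X (n + 1)) p {q} := by
  let p : ℕ → Y := fun k ↦ Nat.casesOn k y q
  have hp : range p = insert y (range q) := Nat.range_casesOn y q
  refine ⟨p, ?_, fun V hV ↦ ?_⟩
  · rintro _ rfl hpq
    obtain ⟨z, hz, hyz⟩ := (fsJump_iff_forall_mem_range.1 hpq).1 y (hp ▸ mem_insert _ _)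
    exact h.1 z hz hyz
  · obtain ⟨C, hC, rfl⟩ := mem_sigmaLevel_succ_iff.1 hV
    exact PairReduces.fsJump_iUnion hE hp fun i ↦ h.2 (C i) (hC i)

-- Antitonicity makes the verdicts of the `V i` an initial segment of `p`s followed by `q`s, so only
-- countably many sequences arise outside the intersection.
lemma PairReduces.relPow_iInter {p q : Y} {V : ℕ → Set X} (hV : Antitone V)
    (h : ∀ i, PairReduces E (V i) p {q}) :
    PairReduces (RelPow E) (⋂ i, V i) (fun _ ↦ p)
      (range fun k j : ℕ ↦ if j < k then p else q) := by
  choose g hg hg_mem hg_notMem using h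
  refine ⟨fun x i ↦ g i x, continuous_pi hg, fun x hx i ↦ hg_mem i x (mem_iInter.1 hx i),
    fun x hx ↦ ?_⟩
  obtain ⟨k, hk⟩ := exists_forall_mem_iff_lt hV hx
  refine ⟨_, mem_range_self k, fun j ↦ ?_⟩
  by_cases hj : j < k
  · simpa only [if_pos hj] using hg_mem j x ((hk j).2 hj)
  · obtain ⟨_, rfl, hjq⟩ := hg_notMem j x ((hk j).not.2 hj)
    simpa only [if_neg hj] using hjq

lemma IsHard.relPow {p q : Y} (h𝒟 : ∀ U ∈ 𝒟, ∀ V ∈ 𝒟, U ∩ V ∈ 𝒟)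
    (h𝒞 : ∀ C ∈ 𝒞, ∃ V : ℕ → Set X, (∀ i, V i ∈ 𝒟) ∧ C = ⋂ i, V i) (h : IsHard E 𝒟 p {q}) :
    IsHard (RelPow E) 𝒞 (fun _ ↦ p) (range fun k j : ℕ ↦ if j < k then p else q) := by
  refine ⟨forall_mem_range.2 fun k hk ↦ h.1 q rfl ?_, fun C hC ↦ ?_⟩
  · simpa only [lt_irrefl, if_false] using hk k
  · obtain ⟨V, hV, rfl⟩ := h𝒞 C hC
    have hV_dissipate (i : ℕ) : dissipate V i ∈ 𝒟 := by
      induction i with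
      | zero => simpa only [dissipate_zero_nat] using hV 0
      | succ i ih => simpa only [dissipate_succ] using h𝒟 _ ih _ (hV (i + 1))
    rw [← iInter_dissipate]
    exact PairReduces.relPow_iInter antitone_dissipate fun i ↦ h.2 _ (hV_dissipate i)

end HardPairs

section BaireSpaceHardness

variable {X : Type*} [TopologicalSpace X]

lemma isHard_eq_isClopen : IsHard (X := X) (· = · : ℕ → ℕ → Prop) {s | IsClopen s} 1 {0} := by
  refine ⟨fun z hz ↦ hz ▸ one_ne_zero, fun C hC ↦ ⟨C.indicator 1, ?_, fun x hx ↦ ?_, fun x hx ↦ ?_⟩⟩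
  · exact IsClopen.continuous_indicator hC continuous_one
  · rw [indicator_of_mem hx, Pi.one_apply]
  · exact ⟨0, rfl, indicator_of_notMem hx 1⟩

lemma exists_iUnion_isClopen_eq [SecondCountableTopology X]
    (hX : IsTopologicalBasis {s : Set X | IsClopen s}) {U : Set X} (hU : IsOpen U) :
    ∃ D : ℕ → Set X, (∀ i, IsClopen (D i)) ∧ U = ⋃ i, D i := by
  obtain ⟨𝒮, h𝒮, h𝒮_countable, rfl⟩ := hX.exists_countable_biUnion_of_isOpen hU
  obtain ⟨D, hD⟩ := (h𝒮_countable.insert ∅).exists_eq_range (insert_nonempty _ _)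
  refine ⟨D, fun i ↦ ?_, ?_⟩
  · have hDi : D i ∈ insert ∅ 𝒮 := hD ▸ mem_range_self i
    exact hDi.elim (fun h ↦ h ▸ isClopen_empty) fun h ↦ h𝒮 h
  · rw [← sUnion_eq_biUnion, ← sUnion_range D, ← hD, sUnion_insert, empty_union]

lemma relPow_eq {Y : Type*} : RelPow (· = · : Y → Y → Prop) = (· = ·) := by
  ext p q
  exact funext_iff.symm

lemma exists_isHard_eq [SecondCountableTopology X]
    (hX : IsTopologicalBasis {s : Set X | IsClopen s}) :
    ∃ (p : ℕ → ℕ) (q : ℕ → ℕ → ℕ), IsHard (· = ·) (PiLevel X 0) p (range q) := by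
  refine ⟨_, _, relPow_eq (Y := ℕ) ▸ isHard_eq_isClopen.relPow (fun _ ↦ ?_) ?_⟩
  · exact fun hU _ hV ↦ hU.inter hV
  · intro C hC
    obtain ⟨D, hD, hCD⟩ := exists_iUnion_isClopen_eq hX hC
    exact ⟨fun i ↦ (D i)ᶜ, fun i ↦ (hD i).compl, by rw [← compl_iUnion, ← hCD, compl_compl]⟩

end BaireSpaceHardness

section Tagging

variable {Y : Type*} [TopologicalSpace Y] {E : Y → Y → Prop}

lemma contReduces_relPow_fsJump {τ : ℕ → Y → Y} (hτ : ∀ i, Continuous (τ i))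
    (hτE : ∀ i j y z, E (τ i y) (τ j z) ↔ i = j ∧ E y z) :
    ContReduces (RelPow (FSJump E)) (FSJump E) := by
  let code (p : ℕ → ℕ → Y) (x : ℕ) : Y := τ x.unpair.1 (p x.unpair.1 x.unpair.2)
  have h_code (p q : ℕ → ℕ → Y) : (∀ x, ∃ z, E (code p x) (code q z)) ↔
      ∀ m k, ∃ l, E (p m k) (q m l) := by
    simp only [code, hτE]
    refine ⟨fun h m k ↦ ?_, fun h x ↦ ?_⟩
    · obtain ⟨z, hmz, hz⟩ := h (Nat.pair m k)
      simp only [Nat.unpair_pair] at hmz hz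
      exact ⟨z.unpair.2, hmz ▸ hz⟩
    · obtain ⟨l, hl⟩ := h x.unpair.1 x.unpair.2
      exact ⟨Nat.pair x.unpair.1 l, by simpa only [Nat.unpair_pair, true_and] using hl⟩
  refine ⟨code, ?_, fun p q ↦ ?_⟩
  · exact continuous_pi fun x ↦ (hτ _).comp (by fun_prop)
  · rw [RelPow, FSJump, h_code, h_code, ← forall_and]
    rfl

end Tagging

section BaireJumps

/-- `eqBaireIter n` is `=_{ℕ^ℕ}^{n+}` on `Tower n = ℕ^(ℕ^(n+1))`; unlike `eqBairePlus` it starts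
from equality itself, `=_{ℕ^ℕ}^{0+}`. -/
def eqBaireIter : (n : ℕ) → Tower n → Tower n → Prop
  | 0 => (· = · : (ℕ → ℕ) → (ℕ → ℕ) → Prop)
  | n + 1 => FSJump (eqBaireIter n)

lemma eqBairePlus_eq_fsJump (n : ℕ) : eqBairePlus n = FSJump (eqBaireIter n) := by
  induction n with
  | zero => rfl
  | succ n ih => exact congrArg FSJump ih

lemma eqBaireIter_equivalence (n : ℕ) : Equivalence (eqBaireIter n) := by
  induction n with
  | zero => exact eq_equivalence
  | succ n ih => exact FSJump.equivalence ih

lemma setOf_eqBaireIter_mem_piLevel (n : ℕ) (y : Tower n) :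
    {x | eqBaireIter n x y} ∈ PiLevel (Tower n) (2 * n) := by
  induction n with
  | zero => exact (isClosed_singleton (X := ℕ → ℕ) (x := y)).isOpen_compl
  | succ n ih => exact setOf_fsJump_mem_piLevel ⟨fun _ _ ↦ (eqBaireIter_equivalence n).symm⟩ ih y

lemma continuous_otimes (n i : ℕ) : Continuous (otimes n i) := by
  induction n with
  | zero =>
    have h_pair : Continuous (Nat.pair · i) := continuous_of_discreteTopology
    exact continuous_pi fun k ↦ h_pair.comp (continuous_apply (A := fun _ ↦ ℕ) k)
  | succ n ih => exact continuous_pi fun k ↦ ih.comp (continuous_apply (A := fun _ ↦ Tower n) k)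

lemma eqBaireIter_otimes_iff (n i j : ℕ) (x y : Tower n) :
    eqBaireIter n (otimes n i x) (otimes n j y) ↔ i = j ∧ eqBaireIter n x y := by
  induction n generalizing i j with
  | zero =>
    change (fun k ↦ Nat.pair (x k) i) = (fun k ↦ Nat.pair (y k) j) ↔
      i = j ∧ (fun k ↦ x k) = fun k ↦ y k
    simp only [funext_iff, Nat.pair_eq_pair, forall_and, forall_const, and_comm]
  | succ n ih =>
    change FSJump _ _ _ ↔ i = j ∧ FSJump _ x y
    simp only [FSJump, otimes, ih, exists_and_left, forall_and, forall_const, eq_comm (a := j)]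
    tauto

lemma contReduces_relPow_eqBairePlus (n : ℕ) :
    ContReduces (RelPow (eqBairePlus n)) (eqBairePlus n) := by
  rw [eqBairePlus_eq_fsJump]
  exact contReduces_relPow_fsJump (continuous_otimes n) (eqBaireIter_otimes_iff n)

variable {X : Type*} [TopologicalSpace X] [SecondCountableTopology X]

lemma exists_isHard_eqBaireIter (hX : IsTopologicalBasis {s : Set X | IsClopen s}) (n : ℕ) :
    ∃ (p : Tower n) (q : ℕ → Tower n),
      IsHard (eqBaireIter n) (PiLevel X (2 * n)) p (range q) := by
  induction n with
  | zero => exact exists_isHard_eq hX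
  | succ n ih =>
    obtain ⟨p, q, h⟩ := ih
    obtain ⟨p', h_jump⟩ := h.exists_fsJump (eqBaireIter_equivalence n)
    have h_pow := h_jump.relPow (𝒞 := PiLevel X (2 * n + 2))
      (fun _ hU _ hV ↦ SigmaLevel.inter_mem hU hV) fun _ ↦ PiLevel.exists_eq_iInter
    obtain ⟨f, hf, hfE⟩ :=
      contReduces_relPow_fsJump (continuous_otimes n) (eqBaireIter_otimes_iff n)
    have h_code := h_pow.map hf hfE
    rw [← range_comp] at h_code
    exact ⟨_, _, h_code⟩

lemma exists_isHard_eqBairePlus (hX : IsTopologicalBasis {s : Set X | IsClopen s}) (n : ℕ) :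
    ∃ p q : Tower (n + 1), IsHard (eqBairePlus n) (SigmaLevel X (2 * n + 1)) p {q} := by
  obtain ⟨p, q, h⟩ := exists_isHard_eqBaireIter hX n
  rw [eqBairePlus_eq_fsJump]
  exact (h.exists_fsJump (eqBaireIter_equivalence n)).imp fun _ h_jump ↦ ⟨q, h_jump⟩

end BaireJumps

section PermutationGroup

/-- The Polish topology of `S_∞ = Sym(ℕ)`: pointwise convergence of `σ` and of `σ⁻¹`. -/
instance permTopologicalSpace : TopologicalSpace (Equiv.Perm ℕ) :=
  .induced (fun σ ↦ ((⇑σ, ⇑σ⁻¹) : (ℕ → ℕ) × (ℕ → ℕ))) inferInstance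

lemma perm_isClosedEmbedding :
    IsClosedEmbedding fun σ : Equiv.Perm ℕ ↦ ((⇑σ, ⇑σ⁻¹) : (ℕ → ℕ) × (ℕ → ℕ)) := by
  refine ⟨⟨⟨rfl⟩, fun σ τ h ↦ DFunLike.coe_injective (congrArg Prod.fst h)⟩, ?_⟩
  have h_range : range (fun σ : Equiv.Perm ℕ ↦ ((⇑σ, ⇑σ⁻¹) : (ℕ → ℕ) × (ℕ → ℕ))) =
      ⋂ (k) (l), {p : (ℕ → ℕ) × (ℕ → ℕ) | p.1 k = l ↔ p.2 l = k} := by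
    ext ⟨f, g⟩
    simp only [mem_range, mem_iInter, mem_ofPred_eq, Prod.mk.injEq]
    constructor
    · rintro ⟨σ, rfl, rfl⟩ k l
      exact (Equiv.Perm.inv_eq_iff_eq.trans eq_comm).symm
    · intro h
      exact ⟨⟨f, g, fun k ↦ (h k _).1 rfl, fun l ↦ (h _ l).2 rfl⟩, rfl, rfl⟩
  rw [h_range]
  refine isClosed_iInter fun k ↦ isClosed_iInter fun l ↦ ?_
  have h_eval : Continuous fun p : (ℕ → ℕ) × (ℕ → ℕ) ↦ (p.1 k, p.2 l) := by fun_prop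
  exact (isClosed_discrete {q : ℕ × ℕ | q.1 = l ↔ q.2 = k}).preimage h_eval

instance permPolishSpace : PolishSpace (Equiv.Perm ℕ) := perm_isClosedEmbedding.polishSpace

lemma continuous_perm_apply {Z : Type*} [TopologicalSpace Z] {σ : Z → Equiv.Perm ℕ} {k : Z → ℕ}
    (hσ : Continuous σ) (hk : Continuous k) : Continuous fun z ↦ σ z (k z) := by
  have h_eval : Continuous fun p : Equiv.Perm ℕ × ℕ ↦ p.1 p.2 :=
    continuous_prod_of_discrete_right.2 fun k ↦
      (continuous_apply k).comp (continuous_fst.comp perm_isClosedEmbedding.continuous)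
  exact h_eval.comp (hσ.prodMk hk)

instance permContinuousInv : ContinuousInv (Equiv.Perm ℕ) where
  continuous_inv := continuous_induced_rng.2 <|
    continuous_swap.comp perm_isClosedEmbedding.continuous

instance permContinuousMul : ContinuousMul (Equiv.Perm ℕ) where
  continuous_mul := by
    refine continuous_induced_rng.2 <| .prodMk (continuous_pi fun k ↦ ?_) (continuous_pi fun k ↦ ?_)
    · change Continuous fun p : Equiv.Perm ℕ × Equiv.Perm ℕ ↦ p.1 (p.2 k)
      exact continuous_perm_apply continuous_fst
        (continuous_perm_apply continuous_snd continuous_const)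
    · change Continuous fun p : Equiv.Perm ℕ × Equiv.Perm ℕ ↦ p.2⁻¹ (p.1⁻¹ k)
      exact continuous_perm_apply continuous_snd.inv
        (continuous_perm_apply continuous_fst.inv continuous_const)

end PermutationGroup

section LogicAction

variable {ι : Type} {ar : ι → ℕ}

/-- The logic action of `S_∞` on structures, `σ • S` being the image of `S` under `σ`. -/
instance mdMulAction : MulAction (Equiv.Perm ℕ) (Md ι ar) where
  smul σ S i v := S i (⇑σ⁻¹ ∘ v)
  one_smul _ := rfl
  mul_smul σ τ S := by
    funext i v
    exact congrArg (fun g : Equiv.Perm ℕ ↦ S i (g ∘ v)) (mul_inv_rev σ τ)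

lemma md_smul_apply (σ : Equiv.Perm ℕ) (S : Md ι ar) (i : ι) (v : Fin (ar i) → ℕ) :
    (σ • S) i v = S i (⇑σ⁻¹ ∘ v) := rfl

lemma iso_iff_exists_smul_eq {A B : Md ι ar} : Iso A B ↔ ∃ σ : Equiv.Perm ℕ, σ • A = B := by
  constructor
  · rintro ⟨σ, hσ, h⟩
    refine ⟨Equiv.ofBijective σ hσ, funext fun i ↦ funext fun v ↦ ?_⟩
    rw [md_smul_apply, h]
    congr 1
    ext k
    exact (Equiv.ofBijective σ hσ).apply_symm_apply _
  · rintro ⟨σ, rfl⟩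
    refine ⟨σ, σ.bijective, fun i v ↦ ?_⟩
    change A i v = A i ((⇑σ.symm ∘ ⇑σ) ∘ v)
    rw [Equiv.symm_comp_self, Function.id_comp]

lemma iso_equivalence : Equivalence (Iso : Md ι ar → Md ι ar → Prop) where
  refl S := iso_iff_exists_smul_eq.2 ⟨1, one_smul _ S⟩
  symm h := by
    obtain ⟨σ, rfl⟩ := iso_iff_exists_smul_eq.1 h
    exact iso_iff_exists_smul_eq.2 ⟨σ⁻¹, inv_smul_smul σ _⟩
  trans h h' := by
    obtain ⟨σ, rfl⟩ := iso_iff_exists_smul_eq.1 h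
    obtain ⟨τ, rfl⟩ := iso_iff_exists_smul_eq.1 h'
    exact iso_iff_exists_smul_eq.2 ⟨τ * σ, mul_smul τ σ _⟩

instance mdContinuousSMul : ContinuousSMul (Equiv.Perm ℕ) (Md ι ar) where
  continuous_smul := by
    refine continuous_pi fun i ↦ continuous_pi fun v ↦ ?_
    have h_eval : Continuous fun p : Md ι ar × (Fin (ar i) → ℕ) ↦ p.1 i p.2 :=
      continuous_prod_of_discrete_right.2 fun w ↦
        (continuous_apply w).comp (continuous_apply (A := fun i ↦ (Fin (ar i) → ℕ) → Bool) i)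
    have h_inv : Continuous fun σ : Equiv.Perm ℕ ↦ ⇑σ⁻¹ ∘ v :=
      continuous_pi fun k ↦ continuous_perm_apply continuous_inv continuous_const
    exact h_eval.comp (continuous_snd.prodMk (h_inv.comp continuous_fst))

instance mdSecondCountableTopology [Countable ι] : SecondCountableTopology (Md ι ar) :=
  inferInstanceAs (SecondCountableTopology (∀ i : ι, (Fin (ar i) → ℕ) → Bool))

lemma md_isTopologicalBasis_isClopen : IsTopologicalBasis {s : Set (Md ι ar) | IsClopen s} :=
  isTopologicalBasis_isClopen (X := ∀ i : ι, (Fin (ar i) → ℕ) → Bool)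

end LogicAction

section Learning

variable {ι : Type} {ar : ι → ℕ} {Y : Type*} [TopologicalSpace Y] {E : Y → Y → Prop}
  {K : Set (Md ι ar)} {A B : Md ι ar} {n : ℕ}

/-- A class of structures is isomorphism-invariant if it contains, with a structure, all its
isomorphic copies. -/
def IsoInvariant (W : Set (Md ι ar)) : Prop :=
  ∀ S T, Iso S T → (S ∈ W ↔ T ∈ W)

lemma subset_learnDom : K ⊆ LearnDom K := fun A hA ↦ ⟨A, hA, iso_equivalence.refl A⟩

lemma smul_mem_learnDom (σ : Equiv.Perm ℕ) (hA : A ∈ K) : σ • A ∈ LearnDom K :=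
  ⟨A, hA, iso_equivalence.symm (iso_iff_exists_smul_eq.2 ⟨σ, rfl⟩)⟩

lemma Learnable.mono {K' : Set (Md ι ar)} (hK : K ⊆ K') (h : Learnable E K') : Learnable E K := by
  obtain ⟨Γ, hΓ, hΓE⟩ := h
  have h_dom : LearnDom K ⊆ LearnDom K' := fun _ ⟨A, hA, hSA⟩ ↦ ⟨A, hK hA, hSA⟩
  exact ⟨Γ ∘ inclusion h_dom, hΓ.comp (continuous_inclusion h_dom),
    fun S T ↦ hΓE (inclusion h_dom S) (inclusion h_dom T)⟩

lemma Learnable.of_contReduces {Z : Type*} [TopologicalSpace Z] {F : Z → Z → Prop}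
    (hEF : ContReduces E F) (h : Learnable E K) : Learnable F K := by
  obtain ⟨Γ, hΓ, hΓE⟩ := h
  obtain ⟨f, hf, hfE⟩ := hEF
  exact ⟨f ∘ Γ, hf.comp hΓ, fun _ _ ↦ (hΓE _ _).trans (hfE _ _)⟩

lemma exists_isoInvariant_of_forall_not_rel (hE : Equivalence E)
    (hE_class : ∀ y, {z | E z y} ∈ PiLevel Y n) {Γ : LearnDom K → ℕ → Y} (hΓ : Continuous Γ)
    (hΓE : ∀ S S' : LearnDom K, Iso S.1 S'.1 → FSJump E (Γ S) (Γ S')) (hA : A ∈ K) (hB : B ∈ K)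
    {k : ℕ} (hk : ∀ l, ¬ E (Γ ⟨A, subset_learnDom hA⟩ k) (Γ ⟨B, subset_learnDom hB⟩ l)) :
    ∃ W ∈ SigmaLevel (Md ι ar) (n + 1), IsoInvariant W ∧ A ∈ W ∧ B ∉ W := by
  let y := Γ ⟨A, subset_learnDom hA⟩ k
  let P (S : LearnDom K) : Prop := ∃ l, E (Γ S l) y
  have hP_iso (S S' : LearnDom K) (h : Iso S.1 S'.1) : P S ↔ P S' :=
    FSJump.exists_rel_iff hE (hΓE S S' h) y
  obtain ⟨V, hV, hV_trace⟩ := SigmaLevel.exists_preimage_eq IsInducing.subtypeVal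
    (SigmaLevel.preimage_mem hΓ (setOf_exists_rel_mem_sigmaLevel hE_class y))
  have hVP {C : Md ι ar} (hC : C ∈ K) (σ : Equiv.Perm ℕ) :
      σ • C ∈ V ↔ P ⟨C, subset_learnDom hC⟩ := by
    refine (Set.ext_iff.1 hV_trace ⟨_, smul_mem_learnDom σ hC⟩).trans (hP_iso _ _ ?_)
    exact iso_equivalence.symm (iso_iff_exists_smul_eq.2 ⟨σ, rfl⟩)
  obtain ⟨W, hW, hW_smul, hAW, hBW⟩ := SigmaLevel.exists_invariant_separating hV
    (fun σ ↦ (hVP hA σ).2 ⟨k, hE.refl y⟩)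
    fun σ h ↦ ((hVP hB σ).1 h).elim fun l hl ↦ hk l (hE.symm hl)
  refine ⟨W, hW, fun S T hST ↦ ?_, hAW, hBW⟩
  obtain ⟨σ, rfl⟩ := iso_iff_exists_smul_eq.1 hST
  exact (hW_smul σ S).symm

lemma Learnable.exists_isoInvariant_separating (hE : Equivalence E)
    (hE_class : ∀ y, {z | E z y} ∈ PiLevel Y n) (hK : Learnable (FSJump E) K) (hA : A ∈ K)
    (hB : B ∈ K) (hAB : ¬ Iso A B) :
    ∃ W ∈ SigmaLevel (Md ι ar) (n + 1), IsoInvariant W ∧ ¬ (A ∈ W ↔ B ∈ W) := by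
  obtain ⟨Γ, hΓ, hΓE⟩ := hK
  have h_inv (S S' : LearnDom K) : Iso S.1 S'.1 → FSJump E (Γ S) (Γ S') := (hΓE S S').1
  have h_inequivalent := (hΓE ⟨A, subset_learnDom hA⟩ ⟨B, subset_learnDom hB⟩).not.1 hAB
  rw [FSJump, not_and_or] at h_inequivalent
  push Not at h_inequivalent
  rcases h_inequivalent with ⟨k, hk⟩ | ⟨k, hk⟩
  · obtain ⟨W, hW, hW_inv, hAW, hBW⟩ :=
      exists_isoInvariant_of_forall_not_rel hE hE_class hΓ h_inv hA hB hk
    exact ⟨W, hW, hW_inv, fun h ↦ hBW (h.1 hAW)⟩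
  · obtain ⟨W, hW, hW_inv, hBW, hAW⟩ :=
      exists_isoInvariant_of_forall_not_rel hE hE_class hΓ h_inv hB hA hk
    exact ⟨W, hW, hW_inv, fun h ↦ hAW (h.2 hBW)⟩

lemma learnable_relPow_of_isoInvariant_separating (hE : Equivalence E) {p q : Y}
    (hpq : IsHard E (SigmaLevel (Md ι ar) n) p {q}) (hK : K.Countable)
    (h_sep : ∀ A ∈ K, ∀ B ∈ K, ¬ Iso A B →
      ∃ W ∈ SigmaLevel (Md ι ar) n, IsoInvariant W ∧ ¬ (A ∈ W ↔ B ∈ W)) :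
    Learnable (RelPow E) K := by
  obtain ⟨W, hW, hW_sep⟩ : ∃ W : ℕ → Set (Md ι ar),
      (∀ m, W m ∈ SigmaLevel (Md ι ar) n ∧ IsoInvariant (W m)) ∧
        ∀ P ∈ {P ∈ K ×ˢ K | ¬ Iso P.1 P.2}, ∃ m, ¬ (P.1 ∈ W m ↔ P.2 ∈ W m) := by
    refine exists_seq_of_countable (s := {P ∈ K ×ˢ K | ¬ Iso P.1 P.2})
      (t := {W | W ∈ SigmaLevel (Md ι ar) n ∧ IsoInvariant W})
      (P := fun P W ↦ ¬ (P.1 ∈ W ↔ P.2 ∈ W)) ((hK.prod hK).mono (sep_subset _ _))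
      ⟨∅, SigmaLevel.empty_mem n, fun _ _ _ ↦ Iff.rfl⟩ fun P hP ↦ ?_
    obtain ⟨W, hW, hW_inv, hPW⟩ := h_sep P.1 hP.1.1 P.2 hP.1.2 hP.2
    exact ⟨W, ⟨hW, hW_inv⟩, hPW⟩
  choose g hg hgE using fun m ↦ hpq.exists_rel_iff hE (hW m).1
  refine ⟨fun S m ↦ g m S.1, continuous_pi fun m ↦ (hg m).comp continuous_subtype_val, ?_⟩
  rintro ⟨S, A, hA, hSA⟩ ⟨T, B, hB, hTB⟩
  refine ⟨fun hST m ↦ (hgE m S T).2 ((hW m).2 S T hST), fun hST ↦ ?_⟩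
  have hAB : Iso A B := by
    by_contra hAB
    obtain ⟨m, hm⟩ := hW_sep (A, B) ⟨⟨hA, hB⟩, hAB⟩
    exact hm <| ((hW m).2 S A hSA).symm.trans <|
      ((hgE m S T).1 (hST m)).trans ((hW m).2 T B hTB)
  exact iso_equivalence.trans hSA (iso_equivalence.trans hAB (iso_equivalence.symm hTB))

end Learning

theorem stmt_14_general {ι : Type} [Countable ι] {ar : ι → ℕ} (n : ℕ) {K : Set (Md ι ar)}
    (hK : K.Countable) :
    Learnable (eqBairePlus n) K ↔
      ∀ A ∈ K, ∀ B ∈ K, A ≠ B → Learnable (eqBairePlus n) ({A, B} : Set (Md ι ar)) := by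
  refine ⟨fun h A hA B hB _ ↦ h.mono (pair_subset hA hB), fun h_pair ↦ ?_⟩
  obtain ⟨p, q, hpq⟩ := exists_isHard_eqBairePlus (md_isTopologicalBasis_isClopen (ar := ar)) n
  have h_sep : ∀ A ∈ K, ∀ B ∈ K, ¬ Iso A B →
      ∃ W ∈ SigmaLevel (Md ι ar) (2 * n + 1), IsoInvariant W ∧ ¬ (A ∈ W ↔ B ∈ W) := by
    intro A hA B hB hAB
    have h_learn := h_pair A hA B hB fun h ↦ hAB (h ▸ iso_equivalence.refl A)
    rw [eqBairePlus_eq_fsJump] at h_learn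
    exact h_learn.exists_isoInvariant_separating (eqBaireIter_equivalence n)
      (setOf_eqBaireIter_mem_piLevel n) (mem_insert _ _) (mem_insert_of_mem _ rfl) hAB
  have hE : Equivalence (eqBairePlus n) := eqBairePlus_eq_fsJump n ▸ eqBaireIter_equivalence (n + 1)
  exact (learnable_relPow_of_isoInvariant_separating hE hpq hK h_sep).of_contReduces
    (contReduces_relPow_eqBairePlus n)

/-- for every `n ≥ 1` (via the shift `eqBairePlus n = =_{ℕ^ℕ}^{(n+1)+}`),
`=_{ℕ^ℕ}^{(n+1)+}` is compact for learning: a countable family of pairwise nonisomorphic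
structures is learnable iff each of its two-element subfamilies is. -/
theorem stmt_14 {ι : Type} [Countable ι] (ar : ι → ℕ) (har : ∃ i, 2 ≤ ar i) (n : ℕ)
    (K : Set (Md ι ar)) (hK : GoodFamily K) :
    Learnable (eqBairePlus n) K ↔
      ∀ A ∈ K, ∀ B ∈ K, A ≠ B → Learnable (eqBairePlus n) ({A, B} : Set (Md ι ar)) :=
  stmt_14_general n hK.1
end

section
/- Let E be an equivalence relation on ℕ → ℕ which, as a subset of (ℕ → ℕ) × (ℕ → ℕ) with the product topology, belongs to Σ⁰_2, and suppose E has uncountably many equivalence classes (the quotient of ℕ → ℕ by E is uncountable). Then E^+ and =_{ℕ^ℕ}^+ are learn-equivalent: a countable family K of pairwise nonisomorphic structures in Mod is E^+-learnable if and only if it is =_{ℕ^ℕ}^+-learnable. -/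
/-!
Up to `E⁺`, a point of `ℕ → X` is determined by the set of `E`-classes it meets. A learner for a
countable family meets only countably many classes `[z j]` in total, so its output amounts to the
set `{j | [z j] is met}`. Such sets can be coded in the jump of any `F` with uncountably many
classes: there are pairwise `F`-inequivalent points `a j`, all accumulated by a sequence `b` that
avoids their classes. List all values of `b`, together with those `a j` for which `[z j]` is met.
This can be done continuously because `[z j]` is `Σ⁰_2`: for each closed set `C` making up `[z j]`
and each entry of the input, produce approximations in `b` to `a j` for as long as the entry looks
like a member of `C`, and settle on the current approximation once the entry is seen to leave `C`.
-/

open Set Filter Topology TopologicalSpace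

section ContinuousSwitch

variable {X Y : Type*} [TopologicalSpace X] [TopologicalSpace Y]

theorem exists_seq_isClopen_iUnion_eq [SecondCountableTopology X]
    (hX : IsTopologicalBasis {s : Set X | IsClopen s}) {O : Set X} (hO : IsOpen O) :
    ∃ U : ℕ → Set X, (∀ n, IsClopen (U n)) ∧ ⋃ n, U n = O := by
  obtain ⟨B, hB, rfl⟩ := hX.open_eq_sUnion hO
  obtain ⟨T, hT, hTB, hTU⟩ := isOpen_sUnion_countable B fun s hs ↦ (hB hs).isOpen
  -- `∅` makes the family nonempty, so that `ℕ` can enumerate it.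
  obtain ⟨U, hU⟩ := (hT.insert ∅).exists_eq_range (insert_nonempty ∅ T)
  refine ⟨U, fun n ↦ ?_, ?_⟩
  · obtain hn | hn : U n ∈ insert ∅ T := hU ▸ mem_range_self n
    · exact hn ▸ isClopen_empty
    · exact hB (hTB hn)
  · rw [← sUnion_range, ← hU, sUnion_insert, empty_union, hTU]

open Classical in
/-- The function that is `s n` at the points whose first entry into the sets `U 0, U 1, …` is at
index `n`, and `a` at the points that enter none of them. It switches continuously from `a` to
values approximating `a` when the `U n` are clopen and `s` tends to `a`. -/
noncomputable def firstEntry (U : ℕ → Set X) (s : ℕ → Y) (a : Y) (x : X) : Y :=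
  if h : ∃ n, x ∈ U n then s (Nat.find h) else a

theorem continuous_firstEntry {U : ℕ → Set X} {s : ℕ → Y} {a : Y} (hU : ∀ n, IsClopen (U n))
    (hs : Tendsto s atTop (𝓝 a)) : Continuous (firstEntry U s a) := by
  classical
  have eventually_notMem {x : X} {N : ℕ} (hx : ∀ n < N, x ∉ U n) :
      ∀ᶠ y in 𝓝 x, ∀ n < N, y ∉ U n :=
    (finite_lt_nat N).eventually_all.2 fun n hn ↦ (hU n).compl.isOpen.mem_nhds (hx n hn)
  refine continuous_iff_continuousAt.2 fun x ↦ ?_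
  by_cases hx : ∃ n, x ∈ U n
  · have eventually_eq : firstEntry U s a =ᶠ[𝓝 x] fun _ ↦ s (Nat.find hx) := by
      filter_upwards [(hU _).isOpen.mem_nhds (Nat.find_spec hx),
        eventually_notMem fun n hn ↦ Nat.find_min hx hn] with y hy hlt
      have hy' : ∃ n, y ∈ U n := ⟨_, hy⟩
      rw [firstEntry, dif_pos hy', (Nat.find_eq_iff hy').2 ⟨hy, hlt⟩]
    exact continuousAt_const.congr eventually_eq.symm
  · have hxa : firstEntry U s a x = a := dif_neg hx
    rw [ContinuousAt, hxa]
    intro V hV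
    obtain ⟨N, hN⟩ := mem_atTop_sets.1 (hs hV)
    rw [mem_map]
    filter_upwards [eventually_notMem fun n (_ : n < N) hn ↦ hx ⟨n, hn⟩] with y hy
    by_cases hyU : ∃ n, y ∈ U n
    · rw [mem_preimage, firstEntry, dif_pos hyU]
      exact hN _ ((Nat.le_find_iff hyU N).2 hy)
    · rw [mem_preimage, firstEntry, dif_neg hyU]
      exact mem_of_mem_nhds hV

theorem exists_continuous_eq_on_isClosed_mem_off [SecondCountableTopology X] [FrechetUrysohnSpace Y]
    (hX : IsTopologicalBasis {s : Set X | IsClopen s}) {C : Set X} (hC : IsClosed C) {Q : Set Y}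
    {a : Y} (ha : a ∈ closure Q) :
    ∃ g : X → Y, Continuous g ∧ (∀ x ∈ C, g x = a) ∧ ∀ x ∉ C, g x ∈ Q := by
  obtain ⟨s, hsQ, hs⟩ := mem_closure_iff_seq_limit.1 ha
  obtain ⟨U, hU, hUC⟩ := exists_seq_isClopen_iUnion_eq hX hC.isOpen_compl
  have mem_U_iff (x : X) : (∃ n, x ∈ U n) ↔ x ∉ C := by rw [← mem_iUnion, hUC, mem_compl_iff]
  refine ⟨firstEntry U s a, continuous_firstEntry hU hs, fun x hx ↦ ?_, fun x hx ↦ ?_⟩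
  · exact dif_neg ((mem_U_iff x).not.2 (not_not.2 hx))
  · rw [firstEntry, dif_pos ((mem_U_iff x).2 hx)]
    exact hsQ _

end ContinuousSwitch

section SigmaLevel

variable {X Y : Type*} [TopologicalSpace X] [TopologicalSpace Y]

theorem mem_sigmaLevel_one_iff {S : Set X} :
    S ∈ SigmaLevel X 1 ↔ ∃ C : ℕ → Set X, (∀ n, IsClosed (C n)) ∧ S = ⋃ n, C n := by
  constructor
  · rintro ⟨A, hA, rfl⟩
    exact ⟨fun n ↦ (A n)ᶜ, fun n ↦ isClosed_compl_iff.2 (hA n), rfl⟩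
  · rintro ⟨C, hC, rfl⟩
    exact ⟨fun n ↦ (C n)ᶜ, fun n ↦ (hC n).isOpen_compl, by simp only [compl_compl]⟩

theorem preimage_mem_sigmaLevel {f : X → Y} (hf : Continuous f) :
    ∀ {n : ℕ} {S : Set Y}, S ∈ SigmaLevel Y n → f ⁻¹' S ∈ SigmaLevel X n
  | 0, _, hS => IsOpen.preimage hf hS
  | _ + 1, _, ⟨A, hA, hS⟩ =>
    ⟨fun i ↦ f ⁻¹' A i, fun i ↦ preimage_mem_sigmaLevel hf (hA i), by
      rw [hS, preimage_iUnion]; rfl⟩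

theorem singleton_mem_sigmaLevel_one [T1Space X] (x : X) : {x} ∈ SigmaLevel X 1 :=
  mem_sigmaLevel_one_iff.2 ⟨fun _ ↦ {x}, fun _ ↦ isClosed_singleton, (iUnion_const _).symm⟩

theorem setOf_rel_mem_sigmaLevel {E : X → X → Prop} {n : ℕ}
    (hE : {x : X × X | E x.1 x.2} ∈ SigmaLevel (X × X) n) (z : X) :
    {x | E x z} ∈ SigmaLevel X n :=
  preimage_mem_sigmaLevel (Continuous.prodMk_left z) hE

theorem exists_continuous_range_eq_union_image [SecondCountableTopology X] [FrechetUrysohnSpace Y]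
    (hX : IsTopologicalBasis {s : Set X | IsClopen s}) {J : Type*} [Countable J] {S : J → Set X}
    (hS : ∀ j, S j ∈ SigmaLevel X 1) {a : J → Y} {b : ℕ → Y}
    (hab : ∀ j, a j ∈ closure (range b)) :
    ∃ G : (ℕ → X) → ℕ → Y, Continuous G ∧
      ∀ p, range (G p) = range b ∪ a '' {j | ∃ k, p k ∈ S j} := by
  choose C hC hSC using fun j ↦ mem_sigmaLevel_one_iff.1 (hS j)
  choose g hg_cont hg_mem hg_notMem using fun j n ↦
    exists_continuous_eq_on_isClosed_mem_off hX (hC j n) (hab j)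
  have mem_S_iff (j : J) (x : X) : x ∈ S j ↔ ∃ n, x ∈ C j n := by rw [hSC j, mem_iUnion]
  let output (p : ℕ → X) : ℕ ⊕ J × ℕ × ℕ → Y :=
    Sum.elim b fun (j, n, k) ↦ g j n (p k)
  have continuous_output : ∀ i, Continuous fun p ↦ output p i
    | .inl _ => continuous_const
    | .inr (j, n, k) => (hg_cont j n).comp (continuous_apply k)
  obtain ⟨e, he⟩ := exists_surjective_nat (ℕ ⊕ J × ℕ × ℕ)
  refine ⟨fun p ↦ output p ∘ e, continuous_pi fun m ↦ continuous_output (e m), fun p ↦ ?_⟩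
  rw [he.range_comp, Sum.elim_range]
  apply Subset.antisymm (union_subset subset_union_left ?_) (union_subset_union_right _ ?_)
  · rintro _ ⟨⟨j, n, k⟩, rfl⟩
    by_cases hk : p k ∈ C j n
    · exact .inr ⟨j, ⟨k, (mem_S_iff j _).2 ⟨n, hk⟩⟩, (hg_mem j n _ hk).symm⟩
    · exact .inl (hg_notMem j n _ hk)
  · rintro _ ⟨j, ⟨k, hk⟩, rfl⟩
    obtain ⟨n, hn⟩ := (mem_S_iff j _).1 hk
    exact ⟨(j, n, k), hg_mem j n _ hn⟩

end SigmaLevel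

section Jump

variable {X J : Type*} {E : X → X → Prop}

/-- The indices `j` such that the sequence `p` meets the `E`-class of `z j`. -/
def metClasses (E : X → X → Prop) (z : J → X) (p : ℕ → X) : Set J :=
  {j | ∃ k, E (p k) (z j)}

/-- The sequence `p` stays in the union of the `E`-classes of the points `z j`. -/
def ConfinedTo (E : X → X → Prop) (z : J → X) (p : ℕ → X) : Prop :=
  ∀ k, ∃ j, E (p k) (z j)

theorem FSJump.metClasses_eq (hE : Equivalence E) {z : J → X} {p q : ℕ → X}
    (h : FSJump E p q) : metClasses E z p = metClasses E z q := by
  have metClasses_subset {p q : ℕ → X} (hpq : ∀ k, ∃ l, E (p k) (q l)) :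
      metClasses E z p ⊆ metClasses E z q := by
    rintro j ⟨k, hk⟩
    obtain ⟨l, hl⟩ := hpq k
    exact ⟨l, hE.trans (hE.symm hl) hk⟩
  exact (metClasses_subset h.1).antisymm (metClasses_subset h.2)

theorem ConfinedTo.exists_rel_of_metClasses_subset (hE : Equivalence E) {z : J → X}
    {p q : ℕ → X} (hp : ConfinedTo E z p) (h : metClasses E z p ⊆ metClasses E z q) (k : ℕ) :
    ∃ l, E (p k) (q l) := by
  obtain ⟨j, hj⟩ := hp k
  obtain ⟨l, hl⟩ := h ⟨k, hj⟩
  exact ⟨l, hE.trans hj (hE.symm hl)⟩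

theorem fsJump_iff_metClasses_eq (hE : Equivalence E) {z : J → X} {p q : ℕ → X}
    (hp : ConfinedTo E z p) (hq : ConfinedTo E z q) :
    FSJump E p q ↔ metClasses E z p = metClasses E z q :=
  ⟨FSJump.metClasses_eq hE, fun h ↦
    ⟨hp.exists_rel_of_metClasses_subset hE h.subset,
      hq.exists_rel_of_metClasses_subset hE h.superset⟩⟩

theorem fsJump_of_range_eq (hE : Equivalence E) {p q : ℕ → X} (h : range p = range q) :
    FSJump E p q := by
  have exists_rel {p q : ℕ → X} (h : range p ⊆ range q) (k : ℕ) : ∃ l, E (p k) (q l) := by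
    obtain ⟨l, hl⟩ := h (mem_range_self k)
    exact ⟨l, hl ▸ hE.refl _⟩
  exact ⟨exists_rel h.subset, exists_rel h.superset⟩

theorem metClasses_eq_of_range_eq (hE : Equivalence E) {a : J → X} {b : ℕ → X}
    (ha : Pairwise fun i j ↦ ¬ E (a i) (a j)) (hab : ∀ j m, ¬ E (a j) (b m)) {P : Set J}
    {p : ℕ → X} (hp : range p = range b ∪ a '' P) : metClasses E a p = P := by
  ext j
  constructor
  · rintro ⟨k, hk⟩
    obtain ⟨m, hm⟩ | ⟨i, hi, hik⟩ : p k ∈ range b ∪ a '' P := hp ▸ mem_range_self k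
    · exact (hab j m (hm ▸ hE.symm hk)).elim
    · have hij : i = j := ha.eq (not_not.2 (hik ▸ hk))
      exact hij ▸ hi
  · intro hj
    obtain ⟨k, hk⟩ : a j ∈ range p := hp ▸ .inr (mem_image_of_mem a hj)
    exact ⟨k, hk ▸ hE.refl _⟩

theorem fsJump_iff_eq_of_range_eq (hE : Equivalence E) {a : J → X} {b : ℕ → X}
    (ha : Pairwise fun i j ↦ ¬ E (a i) (a j)) (hab : ∀ j m, ¬ E (a j) (b m)) {P Q : Set J}
    {p q : ℕ → X} (hp : range p = range b ∪ a '' P) (hq : range q = range b ∪ a '' Q) :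
    FSJump E p q ↔ P = Q := by
  constructor
  · intro h
    rw [← metClasses_eq_of_range_eq hE ha hab hp, h.metClasses_eq hE,
      metClasses_eq_of_range_eq hE ha hab hq]
  · rintro rfl
    exact fsJump_of_range_eq hE (hp.trans hq.symm)

end Jump

section Reduction

variable {X Y : Type*} [TopologicalSpace X] [TopologicalSpace Y]
  {E : X → X → Prop} {F : Y → Y → Prop}

/-- Topologize the quotient by a choice of representatives: `b` lists the representatives of a dense
sequence of classes, and each `a j` represents a class outside it. -/
theorem exists_inequivalent_mem_closure_range [SecondCountableTopology Y]
    (hunc : ¬ Countable (Quot F)) (J : Type*) [Countable J] :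
    ∃ (a : J → Y) (b : ℕ → Y), (Pairwise fun i j ↦ ¬ F (a i) (a j)) ∧
      (∀ j m, ¬ F (a j) (b m)) ∧ ∀ j, a j ∈ closure (range b) := by
  let rep : Quot F → Y := Quot.out
  have eq_of_rel {u v : Quot F} (h : F (rep u) (rep v)) : u = v := by
    rw [← Quot.out_eq u, ← Quot.out_eq v]
    exact Quot.sound h
  let _ : TopologicalSpace (Quot F) := .induced rep inferInstance
  have : SecondCountableTopology (Quot F) := secondCountableTopology_induced _ _ rep
  have : Uncountable (Quot F) := not_countable_iff.1 hunc
  obtain ⟨d, hd⟩ := exists_dense_seq (Quot F)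
  have infinite_compl : (range d)ᶜ.Infinite := fun hfin ↦
    hunc (countable_univ_iff.1 (union_compl_self (range d) ▸
      (countable_range d).union hfin.countable))
  obtain ⟨f, hf⟩ := exists_injective_nat J
  let c (j : J) : ↥(range d)ᶜ := infinite_compl.natEmbedding _ (f j)
  have hc : Function.Injective c := (infinite_compl.natEmbedding _).injective.comp hf
  refine ⟨fun j ↦ rep (c j), rep ∘ d, fun i j hij h ↦ hij ?_, fun j m h ↦ ?_, fun j ↦ ?_⟩
  · exact hc (Subtype.ext (eq_of_rel h))
  · exact (c j).2 ⟨m, (eq_of_rel h).symm⟩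
  · rw [range_comp, ← closure_induced]
    exact hd _

theorem exists_continuous_fsJump_iff_of_confinedTo [SecondCountableTopology X]
    [SecondCountableTopology Y] (hX : IsTopologicalBasis {s : Set X | IsClopen s})
    (hE : Equivalence E) (hF : Equivalence F) (hunc : ¬ Countable (Quot F))
    {J : Type*} [Countable J] {z : J → X} (hz : ∀ j, {x | E x (z j)} ∈ SigmaLevel X 1) :
    ∃ G : (ℕ → X) → ℕ → Y, Continuous G ∧ ∀ p q, ConfinedTo E z p → ConfinedTo E z q →
      (FSJump E p q ↔ FSJump F (G p) (G q)) := by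
  obtain ⟨a, b, ha, hab, hclosure⟩ := exists_inequivalent_mem_closure_range hunc J
  obtain ⟨G, hG, hrange⟩ := exists_continuous_range_eq_union_image hX hz hclosure
  refine ⟨G, hG, fun p q hp hq ↦ ?_⟩
  rw [fsJump_iff_metClasses_eq hE hp hq,
    fsJump_iff_eq_of_range_eq hF ha hab (hrange p) (hrange q)]
  rfl

end Reduction

section Learning

variable {ι : Type} {ar : ι → ℕ} {K : Set (Md ι ar)}

theorem subset_learnDom_s17 (K : Set (Md ι ar)) : K ⊆ LearnDom K :=
  fun A hA ↦ ⟨A, hA, id, Function.bijective_id, fun _ _ ↦ rfl⟩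

theorem confinedTo_of_iso_iff_fsJump {X : Type*} {E : X → X → Prop} {Γ : LearnDom K → ℕ → X}
    (hΓ : ∀ S S' : LearnDom K, Iso S.1 S'.1 ↔ FSJump E (Γ S) (Γ S')) (S : LearnDom K) :
    ConfinedTo E (fun j : K × ℕ ↦ Γ (inclusion (subset_learnDom_s17 K) j.1) j.2) (Γ S) := by
  obtain ⟨A, hA, hSA⟩ := S.2
  intro k
  obtain ⟨l, hl⟩ := ((hΓ S (inclusion (subset_learnDom_s17 K) ⟨A, hA⟩)).1 hSA).1 k
  exact ⟨(⟨A, hA⟩, l), hl⟩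

theorem Learnable.fsJump_of_not_countable_quot {X Y : Type*} [TopologicalSpace X]
    [SecondCountableTopology X] [TopologicalSpace Y] [SecondCountableTopology Y]
    (hX : IsTopologicalBasis {s : Set X | IsClopen s}) {E : X → X → Prop} {F : Y → Y → Prop}
    (hE : Equivalence E) (hclass : ∀ z, {x | E x z} ∈ SigmaLevel X 1) (hF : Equivalence F)
    (hunc : ¬ Countable (Quot F)) (hK : K.Countable) (hL : Learnable (FSJump E) K) :
    Learnable (FSJump F) K := by
  obtain ⟨Γ, hΓ_cont, hΓ⟩ := hL
  have : Countable K := hK.to_subtype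
  have confined := confinedTo_of_iso_iff_fsJump hΓ
  obtain ⟨G, hG_cont, hG⟩ :=
    exists_continuous_fsJump_iff_of_confinedTo hX hE hF hunc fun j : K × ℕ ↦ hclass _
  exact ⟨G ∘ Γ, hG_cont.comp hΓ_cont, fun S S' ↦
    (hΓ S S').trans (hG _ _ (confined S) (confined S'))⟩

theorem not_countable_quot_eq_baire :
    ¬ Countable (Quot (· = · : (ℕ → ℕ) → (ℕ → ℕ) → Prop)) := by
  intro h
  have lift_surjective :
      Function.Surjective (Quot.lift id fun _ _ h ↦ h : Quot (· = ·) → ℕ → ℕ) :=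
    fun x ↦ ⟨Quot.mk _ x, rfl⟩
  have : Countable (ℕ → ℕ) := lift_surjective.countable
  obtain ⟨f, hf⟩ := exists_surjective_nat (ℕ → ℕ)
  obtain ⟨n, hn⟩ := hf fun k ↦ f k k + 1
  exact Nat.succ_ne_self (f n n) (congrFun hn n).symm

theorem stmt_17_general {X : Type*} [TopologicalSpace X] [SecondCountableTopology X]
    (hX : IsTopologicalBasis {s : Set X | IsClopen s}) {E : X → X → Prop} (hE : Equivalence E)
    (hclass : ∀ z, {x | E x z} ∈ SigmaLevel X 1) (hunc : ¬ Countable (Quot E))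
    (hK : K.Countable) :
    Learnable (FSJump E) K ↔
      Learnable (FSJump (· = · : (ℕ → ℕ) → (ℕ → ℕ) → Prop)) K :=
  ⟨.fsJump_of_not_countable_quot hX hE hclass eq_equivalence not_countable_quot_eq_baire hK,
    .fsJump_of_not_countable_quot isTopologicalBasis_clopens eq_equivalence
      singleton_mem_sigmaLevel_one hE hunc hK⟩

end Learning

/-- if `E` is a `Σ⁰_2` (here `SigmaLevel _ 1`) equivalence relation on
`ℕ → ℕ` with uncountably many classes, then `E⁺` and `=_{ℕ^ℕ}^+` are learn-equivalent. -/
theorem stmt_17 {ι : Type} [Countable ι] (ar : ι → ℕ) (har : ∃ i, 2 ≤ ar i)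
    (E : (ℕ → ℕ) → (ℕ → ℕ) → Prop) (hE : Equivalence E)
    (hSigma : {x : (ℕ → ℕ) × (ℕ → ℕ) | E x.1 x.2} ∈
      SigmaLevel ((ℕ → ℕ) × (ℕ → ℕ)) 1)
    (huncount : ¬ Countable (Quot E)) :
    ∀ K : Set (Md ι ar), GoodFamily K →
      (Learnable (FSJump E) K ↔
        Learnable (FSJump (· = · : (ℕ → ℕ) → (ℕ → ℕ) → Prop)) K) :=
  fun _ hK ↦ stmt_17_general isTopologicalBasis_clopens hE (setOf_rel_mem_sigmaLevel hSigma)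
    huncount hK.1
end
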